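/- Let (Γ, ν) be a measure space, d ≥ 1, and write L² for L²(Γ, ν; ℝ^d) with inner product ⟨·,·⟩. Let h : Γ → ℝ be measurable with m ≤ h(x) ≤ M for ν-a.e. x, for some constants 0 < m ≤ M, and for g ∈ L² write h^{±1/2} g for the function x ↦ h(x)^{±1/2} g(x). Let V be a real normed space, V_h ⊆ V a linear subspace, J : V → L² a linear map with ‖J v‖ ≤ C_J·‖v‖ for all v ∈ V, and Π : V → V a linear map with range contained in V_h satisfying the stability ‖Π v‖ ≤ C_Π·‖v‖ and the approximation estimate ‖h^{-1/2} J(v − Π v)‖ ≤ C_A·‖v‖ for all v ∈ V, with constants C_J, C_Π, C_A > 0. Let Λ ⊆ L² and suppose the discrete weighted inf-sup condition holds: there is β > 0 such that for every ξ ∈ Λ, sup over v_h ∈ V_h with ‖v_h‖ ≤ 1 of ⟨J v_h, ξ⟩ is ≥ β·‖h^{1/2} ξ‖. Then for every ξ ∈ Λ, sup over v ∈ V with ‖v‖ ≤ 1 of ⟨J v, ξ⟩ is ≤ (C_Π + C_A/β) times the sup over v_h ∈ V_h with ‖v_h‖ ≤ 1 of ⟨J v_h, ξ⟩. -/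

import Mathlib

/-!
For `‖v‖ ≤ 1` split `⟪J v, ξ⟫ = ⟪J (Π v), ξ⟫ + ⟪J (v - Π v), ξ⟫`. The first term is at most `C_Π`
times the discrete supremum `S`, by stability and scaling. In the second, the weights `h^{-1/2}` and
`h^{1/2}` are inserted (`inner_weights_cancel`), so that Cauchy–Schwarz and the approximation
estimate bound it by `C_A ‖h^{1/2} ξ‖`, and the weighted inf-sup condition gives
`‖h^{1/2} ξ‖ ≤ S / β`.
-/

open MeasureTheory
open scoped RealInnerProductSpace

/-- `L²(Γ, ν; ℝ^d)`. -/
noncomputable abbrev L2Space (Γ : Type*) [MeasurableSpace Γ] (ν : Measure Γ) (d : ℕ) :=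
  Lp (EuclideanSpace ℝ (Fin d)) 2 ν

/-- Multiplications by `h^{-1/2}` and `h^{1/2}` cancel in the `L²` pairing. -/
lemma inner_weights_cancel {Γ : Type*} [MeasurableSpace Γ] {ν : Measure Γ} {d : ℕ}
    {h : Γ → ℝ} (hpos : ∀ᵐ x ∂ν, 0 < h x) {f g f' g' : L2Space Γ ν d}
    (hf : f' =ᵐ[ν] fun x => (Real.sqrt (h x))⁻¹ • f x)
    (hg : g' =ᵐ[ν] fun x => Real.sqrt (h x) • g x) :
    ⟪f', g'⟫ = ⟪f, g⟫ := by
  rw [L2.inner_def, L2.inner_def]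
  refine integral_congr_ae ?_
  filter_upwards [hpos, hf, hg] with x hx hfx hgx
  have hs : Real.sqrt (h x) ≠ 0 := (Real.sqrt_pos.mpr hx).ne'
  rw [hfx, hgx, real_inner_smul_left, real_inner_smul_right, inv_mul_cancel_left₀ hs]

/-- Scaling: a linear functional on a subspace `W` that is at most `S` on the unit ball of `W` is at
most `c * S` on the ball of radius `c > 0`. -/
lemma apply_le_mul_of_unit_ball {V : Type*} [NormedAddCommGroup V] [NormedSpace ℝ V]
    {W : Submodule ℝ V} {φ : V →ₗ[ℝ] ℝ} {S c : ℝ} (hc : 0 < c)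
    (hS : ∀ w ∈ W, ‖w‖ ≤ 1 → φ w ≤ S) {w : V} (hw : w ∈ W) (hwc : ‖w‖ ≤ c) :
    φ w ≤ c * S := by
  have key := hS (c⁻¹ • w) (W.smul_mem _ hw) (by
    rw [norm_smul, Real.norm_of_nonneg (inv_nonneg.mpr hc.le)]
    exact (inv_mul_le_one₀ hc).mpr hwc)
  rw [map_smul, smul_eq_mul] at key
  exact (inv_mul_le_iff₀ hc).mp key

/-- Abstract form of Lemma 1 of the paper: the inf-sup condition for the mortar
coupling in the mesh-dependent weighted norm implies the Babuška–Brezzi inf-sup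
condition with the dual norm.  `Wp` and `Wm` are multiplication by `h^{1/2}`
and `h^{-1/2}`, respectively. -/
theorem weighted_infsup_implies_babuska_brezzi
    {Γ : Type*} [MeasurableSpace Γ] (ν : Measure Γ) (d : ℕ) (hd : 1 ≤ d)
    (h : Γ → ℝ) (hmeas : Measurable h)
    (m M : ℝ) (hm : 0 < m) (hmM : m ≤ M)
    (hbound : ∀ᵐ x ∂ν, m ≤ h x ∧ h x ≤ M)
    (Wp Wm : L2Space Γ ν d →ₗ[ℝ] L2Space Γ ν d)
    (hWp : ∀ g : L2Space Γ ν d, Wp g =ᵐ[ν] fun x => Real.sqrt (h x) • g x)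
    (hWm : ∀ g : L2Space Γ ν d, Wm g =ᵐ[ν] fun x => (Real.sqrt (h x))⁻¹ • g x)
    {V : Type*} [NormedAddCommGroup V] [NormedSpace ℝ V]
    (Vh : Submodule ℝ V)
    (J : V →ₗ[ℝ] L2Space Γ ν d)
    (C_J : ℝ) (hCJ : 0 < C_J)
    (hJ : ∀ v : V, ‖J v‖ ≤ C_J * ‖v‖)
    (Pi : V →ₗ[ℝ] V)
    (hPirange : ∀ v : V, Pi v ∈ Vh)
    (C_Pi C_A : ℝ) (hCPi : 0 < C_Pi) (hCA : 0 < C_A)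
    (hPistab : ∀ v : V, ‖Pi v‖ ≤ C_Pi * ‖v‖)
    (hPiapprox : ∀ v : V, ‖Wm (J (v - Pi v))‖ ≤ C_A * ‖v‖)
    (Λ : Set (L2Space Γ ν d))
    (β : ℝ) (hβ : 0 < β)
    (hinfsup : ∀ ξ ∈ Λ, β * ‖Wp ξ‖ ≤
      sSup {r : ℝ | ∃ vh ∈ Vh, ‖vh‖ ≤ 1 ∧ r = ⟪J vh, ξ⟫}) :
    ∀ ξ ∈ Λ, sSup {r : ℝ | ∃ v : V, ‖v‖ ≤ 1 ∧ r = ⟪J v, ξ⟫} ≤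
      (C_Pi + C_A / β) * sSup {r : ℝ | ∃ vh ∈ Vh, ‖vh‖ ≤ 1 ∧ r = ⟪J vh, ξ⟫} := by
  intro ξ hξ
  have hIS := hinfsup ξ hξ
  set S := sSup {r : ℝ | ∃ vh ∈ Vh, ‖vh‖ ≤ 1 ∧ r = ⟪J vh, ξ⟫}
  -- Continuity of `J` makes the discrete supremum a genuine one rather than the junk value `0`.
  have hbdd : BddAbove {r : ℝ | ∃ vh ∈ Vh, ‖vh‖ ≤ 1 ∧ r = ⟪J vh, ξ⟫} := by
    refine ⟨C_J * ‖ξ‖, ?_⟩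
    rintro r ⟨v, -, hv, rfl⟩
    calc ⟪J v, ξ⟫ ≤ ‖J v‖ * ‖ξ‖ := real_inner_le_norm _ _
      _ ≤ C_J * ‖ξ‖ := by
        gcongr
        exact (hJ v).trans (mul_le_of_le_one_right hCJ.le hv)
  have hle : ∀ w ∈ Vh, ‖w‖ ≤ 1 → ((innerₗ (L2Space Γ ν d) ξ) ∘ₗ J) w ≤ S := by
    intro w hw hw1
    refine le_csSup hbdd ⟨w, hw, hw1, ?_⟩
    simp [real_inner_comm]
  refine csSup_le ⟨_, 0, by simp, rfl⟩ ?_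
  rintro r ⟨v, hv, rfl⟩
  have h1 : ⟪J (Pi v), ξ⟫ ≤ C_Pi * S := by
    have := apply_le_mul_of_unit_ball hCPi hle (hPirange v)
      ((hPistab v).trans (mul_le_of_le_one_right hCPi.le hv))
    simpa [real_inner_comm] using this
  have h2 : ⟪J (v - Pi v), ξ⟫ ≤ C_A / β * S := by
    have hpos : ∀ᵐ x ∂ν, 0 < h x := hbound.mono fun x hx => hm.trans_le hx.1
    calc ⟪J (v - Pi v), ξ⟫ = ⟪Wm (J (v - Pi v)), Wp ξ⟫ :=
          (inner_weights_cancel hpos (hWm _) (hWp _)).symm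
      _ ≤ ‖Wm (J (v - Pi v))‖ * ‖Wp ξ‖ := real_inner_le_norm _ _
      _ ≤ C_A * (S / β) := by
        gcongr
        · exact (hPiapprox v).trans (mul_le_of_le_one_right hCA.le hv)
        · exact (le_div_iff₀' hβ).mpr hIS
      _ = C_A / β * S := by ring
  calc ⟪J v, ξ⟫ = ⟪J (Pi v), ξ⟫ + ⟪J (v - Pi v), ξ⟫ := by
        rw [← inner_add_left, ← map_add, add_sub_cancel]
    _ ≤ (C_Pi + C_A / β) * S := by linarith
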